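/- arXiv:1305.2206 — 3 statements merged into one kernel-verified Lean document; each statement's English description precedes it below -/
import Mathlib

section
/- For all natural numbers a and c, the number of paths P ∈ P(T,B) with t(P) = a and b(P) = c equals the number of paths P ∈ P(T,B) with t(P) = c and b(P) = a. (The joint distribution of the statistics 'number of east steps shared with T' and 'number of east steps shared with B' over P(T,B) is symmetric.) -/
/-- A path `P` lies in `P(T,B)`: it is weakly increasing (monotone) and lies
weakly between the boundaries `B` and `T`. -/
def InP {x y : ℕ} (T B P : Fin x → Fin (y+1)) : Prop :=
  Monotone P ∧ ∀ j, B j ≤ P j ∧ P j ≤ T j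

/-- The number of east steps of `P` shared with the path `Q` (contacts with `Q`). -/
noncomputable def ccount {x y : ℕ} (Q P : Fin x → Fin (y+1)) : ℕ :=
  Nat.card {j : Fin x // P j = Q j}

/-!
Weight a path by `u` per top contact and `v` per bottom contact, so that the claim becomes the
symmetry of the total weight in `u` and `v`. Let `G h` be the total weight of the paths all of whose
heights are at least `h`. Prepending a column with boundaries `b ≤ t` replaces `G` by
`H h = ∑ k ∈ [max b h, t], w k * G k`, where `w` counts the contacts in the new column. Symmetry of
the total weight alone does not carry over from `G` to `H`, but the stronger property that every
admissible column prepended to `G` yields a symmetric total does. The reason is the cutting identity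
`H h + (total of the column [b, h]) = (total of the column [b, t]) + u * G h`, which expresses
`H h - u * G h` as a difference of two symmetric totals.
-/

open Finset

section Column

variable {α R : Type*} [LinearOrder α] [CommSemiring R]

/-- The contribution of one east step at height `k` to the weight of a path, in a column with top
boundary `t` and bottom boundary `b`: `u` for a top contact, `v` for a bottom contact. -/
def contactWeight (u v : R) (t b k : α) : R :=
  (if k = t then u else 1) * (if k = b then v else 1)

theorem prod_contactWeight {ι : Type*} [Fintype ι] (u v : R) (T B P : ι → α) :
    ∏ j, contactWeight u v (T j) (B j) (P j) = u ^ #{j | P j = T j} * v ^ #{j | P j = B j} := by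
  simp only [contactWeight, prod_mul_distrib, prod_ite, prod_const, one_pow, mul_one]

variable [LocallyFiniteOrder α]

/-- The weighted sum of `G` over the heights `k ≥ h` of a column with top boundary `t` and bottom
boundary `b`. If `G k` is the total weight of the continuations of height at least `k`, this is the
total weight of the paths of height at least `h` that start in the column; `h = b` gives the whole
column. -/
def columnSum (u v : R) (t b : α) (G : α → R) (h : α) : R :=
  ∑ k ∈ Icc (b ⊔ h) t, contactWeight u v t b k * G k

variable {u v : R} {t b h : α} {G : α → R}

theorem columnSum_of_le (hb : h ≤ b) : columnSum u v t b G h = columnSum u v t b G b := by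
  rw [columnSum, columnSum, sup_eq_left.2 hb, sup_idem]

theorem columnSum_of_lt (htb : t < b) : columnSum u v t b G h = 0 := by
  rw [columnSum, Icc_eq_empty fun hle => (le_sup_left.trans hle).not_gt htb, sum_empty]

theorem columnSum_self (t : α) : columnSum u v t t G t = u * v * G t := by
  simp [columnSum, contactWeight]

theorem columnSum_eq_add_sum_Ioo (hbt : b < t) :
    columnSum u v t b G b = v * G b + ∑ k ∈ Ioo b t, G k + u * G t := by
  have inner : ∀ k ∈ Ioo b t, contactWeight u v t b k * G k = G k := fun k hk => by
    have ⟨hbk, hkt⟩ := mem_Ioo.1 hk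
    simp [contactWeight, hbk.ne', hkt.ne]
  rw [columnSum, sup_idem, Icc_eq_cons_Ico hbt.le, sum_cons, Ico_eq_cons_Ioo hbt, sum_cons,
    sum_congr rfl inner]
  simp only [contactWeight, hbt.ne, hbt.ne', if_true, if_false, one_mul, mul_one]
  ring

end Column

section ColumnInvariant

variable {α R : Type*} [LinearOrder α] [LocallyFiniteOrder α] [CommRing R] {u v : R} {t b h : α}
  {G : α → R}

theorem columnSum_sub_mul (hbh : b < h) (hht : h ≤ t) :
    columnSum u v t b G h - u * G h = columnSum u v t b G b - columnSum u v h b G b := by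
  have below : ∀ k ∈ Ico b h, contactWeight u v h b k * G k = contactWeight u v t b k * G k :=
    fun k hk => by
      have hkh : k < h := (mem_Ico.1 hk).2
      simp only [contactWeight, hkh.ne, (hkh.trans_le hht).ne]
  have split : Icc b t = Ico b h ∪ Icc h t := by
    rw [← coe_inj]
    push_cast
    exact (Set.Ico_union_Icc_eq_Icc hbh.le hht).symm
  have disj : Disjoint (Ico b h) (Icc h t) :=
    disjoint_left.2 fun k hk hk' => (mem_Ico.1 hk).2.not_ge (mem_Icc.1 hk').1
  simp only [columnSum, sup_idem, sup_eq_right.2 hbh.le]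
  rw [Icc_eq_cons_Ico hbh.le, sum_cons, sum_congr rfl below, split, sum_union disj]
  simp only [contactWeight, hbh.ne', if_true, if_false, mul_one]
  ring

variable {S : Type*} [SetLike S R] {A : S}

/-- The induction invariant: `A` contains the values of `G` up to the bottom boundary `b` and the
total of each column whose boundaries lie weakly below `t` and `b`, that is, of each column that may
precede a column with boundaries `t` and `b`. In the application `A` is the ring of symmetric
polynomials. -/
structure ColumnStable (A : S) (u v : R) (t b : α) (G : α → R) : Prop where
  mem : ∀ h ≤ b, G h ∈ A
  columnSum_mem : ∀ t' ≤ t, ∀ b' ≤ b, columnSum u v t' b' G b' ∈ A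

theorem ColumnStable.mono {t' b' : α} (hG : ColumnStable A u v t b G) (ht : t' ≤ t) (hb : b' ≤ b) :
    ColumnStable A u v t' b' G where
  mem h hh := hG.mem h (hh.trans hb)
  columnSum_mem t'' ht'' b'' hb'' := hG.columnSum_mem t'' (ht''.trans ht) b'' (hb''.trans hb)

variable [SubringClass S R]

theorem columnSum_one_mem (hadd : u + v ∈ A) (hmul : u * v ∈ A) (t b : α) :
    columnSum u v t b 1 b ∈ A := by
  rcases lt_trichotomy t b with htb | rfl | hbt
  · rw [columnSum_of_lt htb]
    exact zero_mem A
  · simpa [columnSum_self] using hmul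
  · have regroup : columnSum u v t b 1 b = u + v + ∑ _k ∈ Ioo b t, (1 : R) := by
      simp only [columnSum_eq_add_sum_Ioo hbt, Pi.one_apply]
      ring
    rw [regroup]
    exact add_mem hadd (sum_mem fun _ _ => one_mem A)

namespace ColumnStable

theorem one (hadd : u + v ∈ A) (hmul : u * v ∈ A) (t b : α) :
    ColumnStable A u v t b (1 : α → R) where
  mem _ _ := one_mem A
  columnSum_mem t' _ b' _ := columnSum_one_mem hadd hmul t' b'

theorem columnSum_sub_mem (hG : ColumnStable A u v t b G) (hbh : b < h) (hht : h ≤ t) :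
    columnSum u v t b G h - u * G h ∈ A := by
  rw [columnSum_sub_mul hbh hht]
  exact sub_mem (hG.columnSum_mem t le_rfl b le_rfl) (hG.columnSum_mem h hht b le_rfl)

theorem columnSum_columnSum_mem_of_le (hG : ColumnStable A u v t b G) (hadd : u + v ∈ A)
    (hmul : u * v ∈ A) {t' : α} (htb : t' ≤ b) (b' : α) :
    columnSum u v t' b' (columnSum u v t b G) b' ∈ A := by
  have const : columnSum u v t' b' (columnSum u v t b G) b' =
      columnSum u v t' b' 1 b' * columnSum u v t b G b := by
    rw [columnSum, columnSum, sum_mul]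
    refine sum_congr rfl fun k hk => ?_
    rw [columnSum_of_le ((mem_Icc.1 hk).2.trans htb), Pi.one_apply, mul_one]
  rw [const]
  exact mul_mem (columnSum_one_mem hadd hmul t' b') (hG.columnSum_mem t le_rfl b le_rfl)

theorem columnSum_columnSum_mem_of_lt (hG : ColumnStable A u v t b G) (hadd : u + v ∈ A)
    (hmul : u * v ∈ A) {t' b' : α} (ht : t' ≤ t) (hb : b' ≤ b) (hbt : b < t') :
    columnSum u v t' b' (columnSum u v t b G) b' ∈ A := by
  have sum_above : ∑ k ∈ Ioo b' t', (if b < k then u * G k else 0) = u * ∑ k ∈ Ioo b t', G k := by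
    rw [← sum_filter, mul_sum]
    refine sum_congr (Finset.ext fun k => ?_) fun _ _ => rfl
    simp only [mem_filter, mem_Ioo]
    exact ⟨fun hk => ⟨hk.2, hk.1.2⟩, fun hk => ⟨⟨hb.trans_lt hk.1, hk.2⟩, hk.1⟩⟩
  have decomposition : columnSum u v t' b' (columnSum u v t b G) b' =
      (u + v) * columnSum u v t b G b - u * v * G b +
        ∑ k ∈ Ioo b' t', (columnSum u v t b G k - if b < k then u * G k else 0) := by
    rw [columnSum_eq_add_sum_Ioo (hb.trans_lt hbt), columnSum_of_le hb, sum_sub_distrib, sum_above]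
    have cut := columnSum_sub_mul (u := u) (v := v) (G := G) hbt ht
    rw [columnSum_eq_add_sum_Ioo hbt] at cut
    linear_combination u * cut
  have whole_mem : columnSum u v t b G b ∈ A := hG.columnSum_mem t le_rfl b le_rfl
  rw [decomposition]
  refine add_mem (sub_mem (mul_mem hadd whole_mem) (mul_mem hmul (hG.mem b le_rfl)))
    (sum_mem fun k hk => ?_)
  split_ifs with hbk
  · exact hG.columnSum_sub_mem hbk ((mem_Ioo.1 hk).2.le.trans ht)
  · rwa [sub_zero, columnSum_of_le (not_lt.1 hbk)]

protected theorem columnSum (hG : ColumnStable A u v t b G) (hadd : u + v ∈ A)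
    (hmul : u * v ∈ A) : ColumnStable A u v t b (columnSum u v t b G) where
  mem h hh := by
    rw [columnSum_of_le hh]
    exact hG.columnSum_mem t le_rfl b le_rfl
  columnSum_mem t' ht b' hb := by
    rcases le_or_gt t' b with htb | hbt
    · exact hG.columnSum_columnSum_mem_of_le hadd hmul htb b'
    · exact hG.columnSum_columnSum_mem_of_lt hadd hmul ht hb hbt

end ColumnStable

end ColumnInvariant

section Path

theorem monotone_finCons {α : Type*} [Preorder α] {n : ℕ} {a : α} {f : Fin n → α} :
    Monotone (Fin.cons a f : Fin (n + 1) → α) ↔ (∀ j, a ≤ f j) ∧ Monotone f := by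
  simpa only [monotone_iff_forall_lt] using! Fin.liftFun_cons (α := α) (· ≤ ·)

variable {α R : Type*} [LinearOrder α] [LocallyFiniteOrder α] {x : ℕ}

/-- The finite set of weakly increasing height functions weakly between `B` and `T`: the set
`P(T,B)`, with heights in an arbitrary locally finite linear order. -/
def boundedPaths (T B : Fin x → α) : Finset (Fin x → α) :=
  {P ∈ Fintype.piFinset fun j => Icc (B j) (T j) | Monotone P}

theorem mem_boundedPaths {T B P : Fin x → α} :
    P ∈ boundedPaths T B ↔ Monotone P ∧ ∀ j, B j ≤ P j ∧ P j ≤ T j := by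
  simp only [boundedPaths, mem_filter, Fintype.mem_piFinset, mem_Icc, and_comm]

theorem cons_mem_boundedPaths {T B : Fin (x + 1) → α} {k : α} {P : Fin x → α} :
    (Fin.cons k P : Fin (x + 1) → α) ∈ boundedPaths T B ↔
      k ∈ Icc (B 0) (T 0) ∧ P ∈ boundedPaths (Fin.tail T) (Fin.tail B) ∧ ∀ j, k ≤ P j := by
  simp only [mem_boundedPaths, monotone_finCons, Fin.forall_fin_succ, Fin.cons_zero,
    Fin.cons_succ, Fin.tail, mem_Icc]
  tauto

section CommSemiring

variable [CommSemiring R] {u v : R}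

/-- The total weight of the paths between `B` and `T` all of whose heights are at least `h`. -/
def pathSum (u v : R) (T B : Fin x → α) (h : α) : R :=
  ∑ P ∈ boundedPaths T B with ∀ j, h ≤ P j, ∏ j, contactWeight u v (T j) (B j) (P j)

theorem pathSum_zero (T B : Fin 0 → α) : pathSum u v T B = 1 := by
  ext h
  simp [pathSum, boundedPaths, Subsingleton.monotone]

theorem pathSum_succ (T B : Fin (x + 1) → α) :
    pathSum u v T B = columnSum u v (T 0) (B 0) (pathSum u v (Fin.tail T) (Fin.tail B)) := by
  ext h
  simp only [pathSum, columnSum, mul_sum]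
  rw [sum_sigma']
  refine sum_nbij' (fun P => ⟨P 0, Fin.tail P⟩) (fun p => Fin.cons p.1 p.2) ?_ ?_
    (fun P _ => Fin.cons_self_tail P) (fun _ _ => rfl) (fun P _ => Fin.prod_univ_succ _)
  · intro P hP
    rw [← Fin.cons_self_tail P, mem_filter, cons_mem_boundedPaths] at hP
    obtain ⟨⟨h0, hmem, hle⟩, hh⟩ := hP
    exact mem_sigma.2 ⟨mem_Icc.2 ⟨sup_le (mem_Icc.1 h0).1 (hh 0), (mem_Icc.1 h0).2⟩,
      mem_filter.2 ⟨hmem, hle⟩⟩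
  · rintro ⟨k, P⟩ hP
    obtain ⟨hk, hmem, hle⟩ : k ∈ Icc (B 0 ⊔ h) (T 0) ∧
        P ∈ boundedPaths (Fin.tail T) (Fin.tail B) ∧ ∀ j, k ≤ P j := by simpa using hP
    obtain ⟨hBh, hkT⟩ := mem_Icc.1 hk
    obtain ⟨hBk, hhk⟩ := sup_le_iff.1 hBh
    exact mem_filter.2 ⟨cons_mem_boundedPaths.2 ⟨mem_Icc.2 ⟨hBk, hkT⟩, hmem, hle⟩,
      Fin.cases hhk fun j => hhk.trans (hle j)⟩

end CommSemiring

variable [CommRing R] {u v : R} {S : Type*} [SetLike S R] [SubringClass S R] {A : S}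

theorem columnStable_pathSum (hadd : u + v ∈ A) (hmul : u * v ∈ A) {T B : Fin x → α}
    (hT : Monotone T) (hB : Monotone B) {t b : α} (ht : ∀ j, t ≤ T j) (hb : ∀ j, b ≤ B j) :
    ColumnStable A u v t b (pathSum u v T B) := by
  induction x generalizing t b with
  | zero =>
    rw [pathSum_zero]
    exact .one hadd hmul t b
  | succ x ih =>
    have tail_stable : ColumnStable A u v (T 0) (B 0) (pathSum u v (Fin.tail T) (Fin.tail B)) :=
      ih (hT.comp Fin.strictMono_succ.monotone) (hB.comp Fin.strictMono_succ.monotone)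
        (fun j => hT (Fin.zero_le _)) (fun j => hB (Fin.zero_le _))
    rw [pathSum_succ]
    exact (tail_stable.columnSum hadd hmul).mono (ht 0) (hb 0)

theorem sum_prod_contactWeight_mem (hadd : u + v ∈ A) (hmul : u * v ∈ A) {T B : Fin x → α}
    (hT : Monotone T) (hB : Monotone B) :
    ∑ P ∈ boundedPaths T B, ∏ j, contactWeight u v (T j) (B j) (P j) ∈ A := by
  cases x with
  | zero =>
    refine sum_mem fun P _ => ?_
    rw [Fin.prod_univ_zero]
    exact one_mem A
  | succ x =>
    have above_bottom : ∀ P ∈ boundedPaths T B, ∀ j, B 0 ≤ P j := fun P hP j =>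
      (hB (Fin.zero_le j)).trans ((mem_boundedPaths.1 hP).2 j).1
    rw [← filter_true_of_mem above_bottom]
    exact (columnStable_pathSum hadd hmul hT hB (fun j => hT (Fin.zero_le j))
      (fun j => hB (Fin.zero_le j))).mem (B 0) le_rfl

end Path

section JointDistribution

open MvPolynomial

section CommSemiring

variable {ι R : Type*} [CommSemiring R]

theorem coeff_sum_X_pow_mul_X_pow (s : Finset ι) (f g : ι → ℕ) (a c : ℕ) :
    coeff (Finsupp.single true a + Finsupp.single false c)
      (∑ i ∈ s, (X true ^ f i * X false ^ g i : MvPolynomial Bool R)) =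
      #{i ∈ s | f i = a ∧ g i = c} := by
  have exponent_eq_iff : ∀ i, Finsupp.single true (f i) + Finsupp.single false (g i) =
      Finsupp.single true a + Finsupp.single false c ↔ f i = a ∧ g i = c := fun i => by
    simp [Finsupp.ext_iff, and_comm]
  simp only [coeff_sum, X_pow_eq_monomial, monomial_mul, coeff_monomial, exponent_eq_iff, mul_one,
    sum_boole]

theorem coeff_single_add_single_comm {p : MvPolynomial Bool R} (hp : p.IsSymmetric) (a c : ℕ) :
    coeff (Finsupp.single true a + Finsupp.single false c) p =
      coeff (Finsupp.single true c + Finsupp.single false a) p := by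
  rw [← coeff_rename_mapDomain _ Equiv.boolNot.injective, hp Equiv.boolNot]
  simp [Finsupp.mapDomain_add, add_comm]

theorem card_filter_comm_of_isSymmetric [CharZero R] {s : Finset ι} {f g : ι → ℕ}
    (hsymm : (∑ i ∈ s, (X true ^ f i * X false ^ g i : MvPolynomial Bool R)).IsSymmetric)
    (a c : ℕ) : #{i ∈ s | f i = a ∧ g i = c} = #{i ∈ s | f i = c ∧ g i = a} := by
  simpa only [coeff_sum_X_pow_mul_X_pow, Nat.cast_inj] using
    coeff_single_add_single_comm hsymm a c

end CommSemiring

variable {α : Type*} [LinearOrder α] [LocallyFiniteOrder α] {x : ℕ}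

theorem isSymmetric_sum_boundedPaths (R : Type*) [CommRing R] {T B : Fin x → α}
    (hT : Monotone T) (hB : Monotone B) :
    (∑ P ∈ boundedPaths T B, (X true ^ #{j | P j = T j} * X false ^ #{j | P j = B j} :
      MvPolynomial Bool R)).IsSymmetric := by
  have hadd : (X true + X false : MvPolynomial Bool R) ∈ symmetricSubalgebra Bool R := fun e => by
    simpa using Equiv.sum_comp e (X : Bool → MvPolynomial Bool R)
  have hmul : (X true * X false : MvPolynomial Bool R) ∈ symmetricSubalgebra Bool R := fun e => by
    simpa using Equiv.prod_comp e (X : Bool → MvPolynomial Bool R)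
  simpa only [prod_contactWeight] using
    (mem_symmetricSubalgebra _).1 (sum_prod_contactWeight_mem hadd hmul hT hB)

theorem natCard_boundedPaths (T B : Fin x → α) (a c : ℕ) :
    Nat.card {P : Fin x → α // (Monotone P ∧ ∀ j, B j ≤ P j ∧ P j ≤ T j) ∧
      Nat.card {j // P j = T j} = a ∧ Nat.card {j // P j = B j} = c} =
    #{P ∈ boundedPaths T B | #{j | P j = T j} = a ∧ #{j | P j = B j} = c} :=
  Nat.subtype_card _ fun P => by
    simp only [mem_filter, mem_boundedPaths, Nat.card_eq_fintype_card, Fintype.card_subtype]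

end JointDistribution

theorem stmt0_general {α : Type*} [LinearOrder α] [LocallyFiniteOrder α] {x : ℕ} {T B : Fin x → α}
    (hT : Monotone T) (hB : Monotone B) (a c : ℕ) :
    Nat.card {P : Fin x → α // (Monotone P ∧ ∀ j, B j ≤ P j ∧ P j ≤ T j) ∧
      Nat.card {j // P j = T j} = a ∧ Nat.card {j // P j = B j} = c} =
    Nat.card {P : Fin x → α // (Monotone P ∧ ∀ j, B j ≤ P j ∧ P j ≤ T j) ∧
      Nat.card {j // P j = T j} = c ∧ Nat.card {j // P j = B j} = a} := by
  rw [natCard_boundedPaths, natCard_boundedPaths]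
  exact card_filter_comm_of_isSymmetric (isSymmetric_sum_boundedPaths ℤ hT hB) a c

/-- The joint distribution of `(t, b)` over `P(T,B)` is symmetric. -/
theorem stmt0 {x y : ℕ} (T B : Fin x → Fin (y+1))
    (hT : Monotone T) (hB : Monotone B) (hTB : ∀ j, B j ≤ T j) (a c : ℕ) :
    Nat.card {P : Fin x → Fin (y+1) // InP T B P ∧ ccount T P = a ∧ ccount B P = c}
    = Nat.card {P : Fin x → Fin (y+1) // InP T B P ∧ ccount T P = c ∧ ccount B P = a} :=
  stmt0_general hT hB a c
end

section
/- Let k ≥ 1 and, for P ∈ P^k(T,B), define v_i(P) = #{m ∈ Fin y : g_{P_i}(m) = g_{P_{i+1}}(m)} for 0 ≤ i ≤ k (the number of north steps shared by P_i and P_{i+1}), and set t(P) = h_0(P), b(P) = h_k(P), ℓ(P) = v_0(P), r(P) = v_k(P). For all natural numbers a and c, the number of tuples P ∈ P^k(T,B) with b(P) = a and ℓ(P) = c equals the number of tuples P ∈ P^k(T,B) with t(P) = a and r(P) = c. -/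
/-- A `k`-tuple of paths lies in `P^k(T,B)`: every path lies in `P(T,B)` and
each path lies weakly above the next one. -/
def InPk {x y k : ℕ} (T B : Fin x → Fin (y+1)) (P : Fin k → Fin x → Fin (y+1)) : Prop :=
  (∀ i, InP T B (P i)) ∧
  ∀ (i : Fin k) (hi : (i : ℕ) + 1 < k) (j : Fin x), P ⟨(i : ℕ) + 1, hi⟩ j ≤ P i j

/-- The extended tuple, with the conventions `P_0 = T` and `P_{k+1} = B`. -/
def extP {x y k : ℕ} (T B : Fin x → Fin (y+1)) (P : Fin k → Fin x → Fin (y+1))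
    (i : Fin (k+2)) : Fin x → Fin (y+1) :=
  if h0 : (i : ℕ) = 0 then T
  else if hk1 : (i : ℕ) = k + 1 then B
  else P ⟨(i : ℕ) - 1, by have := i.isLt; omega⟩

/-- `hstat T B P i` is the number of east steps shared by `P_i` and `P_{i+1}`. -/
noncomputable def hstat {x y k : ℕ} (T B : Fin x → Fin (y+1))
    (P : Fin k → Fin x → Fin (y+1)) (i : Fin (k+1)) : ℕ :=
  Nat.card {j : Fin x // extP T B P i.castSucc j = extP T B P i.succ j}

/-- `gstat P i` is the x-coordinate of the `i`-th north step of the path `P`. -/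
noncomputable def gstat {x y : ℕ} (P : Fin x → Fin (y+1)) (i : Fin y) : ℕ :=
  Nat.card {j : Fin x // (P j : ℕ) ≤ (i : ℕ)}

/-- `vstat T B P i` is the number of north steps shared by `P_i` and `P_{i+1}`. -/
noncomputable def vstat {x y k : ℕ} (T B : Fin x → Fin (y+1))
    (P : Fin k → Fin x → Fin (y+1)) (i : Fin (k+1)) : ℕ :=
  Nat.card {m : Fin y // gstat (extP T B P i.castSucc) m = gstat (extP T B P i.succ) m}

/-!
For a single path the theorem follows from deletion and contraction. If the first step is forced, it
contributes the same amount to `(t, r)` and to `(b, ℓ)` and can be removed. If it is free, it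
contributes nothing to `(t, r)`, because it is an east step of `B` and a north step of `T`; so the
generating function of `(t, r)` splits into those of the two regions obtained by fixing that step. A
half turn exchanges `(t, r)` with `(b, ℓ)`, so the generating function of `(b, ℓ)` satisfies the
same recursions at the last step. When both end steps are free, resolving the first step and then
the last one gives the same four regions as the opposite order, and induction on `x + y` identifies
the two generating functions.

For a `k`-tuple, fix the first path `P_1`. Induction below `P_1` replaces `h_k` by `h_1`; moving
`P_1` alone between `T` and `P_2` turns `(h_1, v_0)` into `(h_0, v_1)`; induction below `P_1` then
replaces `v_1` by `v_k`.
-/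

namespace LatticePath

open Finset

section Statistics

variable {x y n : ℕ}

/-- The number of east steps shared by two paths; `hstat T B P i` is
`commonEast (P_i) (P_{i+1})`. -/
noncomputable def commonEast (P Q : Fin x → Fin (y + 1)) : ℕ :=
  Nat.card {j : Fin x // P j = Q j}

/-- The number of north steps shared by two paths; `vstat T B P i` is
`commonNorth (P_i) (P_{i+1})`. -/
noncomputable def commonNorth (P Q : Fin x → Fin (y + 1)) : ℕ :=
  Nat.card {m : Fin y // gstat P m = gstat Q m}

/-- Shift a path one unit down, as when its first north step is removed; a step at height `0`
stays there. -/
def lower (P : Fin x → Fin (y + 2)) : Fin x → Fin (y + 1) :=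
  fun j => Fin.predAbove 0 (P j)

/-- Cap a path one unit below the maximal height, as when its last north step is removed. -/
def cap (P : Fin x → Fin (y + 2)) : Fin x → Fin (y + 1) :=
  fun j => Fin.predAbove (Fin.last y) (P j)

/-- The path traversed backwards, that is, rotated by a half turn. -/
def rotate (P : Fin x → Fin (y + 1)) : Fin x → Fin (y + 1) :=
  fun j => (P j.rev).rev

lemma val_lower (P : Fin x → Fin (y + 2)) (j : Fin x) : (lower P j : ℕ) = P j - 1 := by
  rw [lower, Fin.predAbove_zero]
  grind

lemma val_cap (P : Fin x → Fin (y + 2)) (j : Fin x) : (cap P j : ℕ) = min (P j : ℕ) y := by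
  rw [cap, Fin.predAbove_last_apply]
  split_ifs with h
  · simp [h]
  · grind [Fin.coe_castPred]

lemma rotate_rotate (P : Fin x → Fin (y + 1)) : rotate (rotate P) = P := by
  funext j
  simp [rotate]

lemma rotate_zero (P : Fin (n + 1) → Fin (y + 1)) : rotate P 0 = (P (Fin.last n)).rev := by
  simp [rotate]

lemma tail_rotate (P : Fin (n + 1) → Fin (y + 1)) :
    Fin.tail (rotate P) = rotate (Fin.init P) := by
  funext j
  simp [rotate, Fin.tail, Fin.init, Fin.rev_succ]

lemma lower_rotate (P : Fin x → Fin (y + 2)) : lower (rotate P) = rotate (cap P) := by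
  funext j
  simp [rotate, lower, cap, Fin.rev_predAbove]

lemma lower_cap (P : Fin x → Fin (y + 3)) : lower (cap P) = cap (lower P) := by
  funext j
  ext
  simp only [val_lower, val_cap]
  omega

lemma lower_const_zero : lower (fun _ : Fin x => (0 : Fin (y + 2))) = fun _ => 0 := by
  ext
  simp [val_lower]

lemma lower_const_last : lower (fun _ : Fin x => Fin.last (y + 1)) = fun _ => Fin.last y := by
  ext
  simp [val_lower]

lemma cap_const_zero : cap (fun _ : Fin x => (0 : Fin (y + 2))) = fun _ => 0 := by
  ext
  simp [val_cap]

lemma cap_const_last : cap (fun _ : Fin x => Fin.last (y + 1)) = fun _ => Fin.last y := by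
  ext
  simp [val_cap]

lemma card_fin_succ_subtype (p : Fin (n + 1) → Prop) [DecidablePred p] :
    Nat.card {j // p j} = (if p 0 then 1 else 0) + Nat.card {j : Fin n // p j.succ} := by
  simp only [Nat.card_eq_fintype_card, Fintype.card_subtype]
  exact Fin.card_filter_univ_succ' p

lemma commonEast_eq_tail (P Q : Fin (n + 1) → Fin (y + 1)) :
    commonEast P Q = (if P 0 = Q 0 then 1 else 0) + commonEast (Fin.tail P) (Fin.tail Q) :=
  card_fin_succ_subtype fun j => P j = Q j

lemma commonEast_lower {P Q : Fin x → Fin (y + 2)} (hP : ∀ j, P j ≠ 0) (hQ : ∀ j, Q j ≠ 0) :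
    commonEast (lower P) (lower Q) = commonEast P Q := by
  refine Nat.card_congr (Equiv.subtypeEquivRight fun j => ?_)
  rw [← Fin.succ_inj, lower, lower, Fin.succ_predAbove_zero (hP j), Fin.succ_predAbove_zero (hQ j)]

lemma commonEast_rotate (P Q : Fin x → Fin (y + 1)) :
    commonEast (rotate P) (rotate Q) = commonEast P Q :=
  Nat.card_congr (Fin.revPerm.subtypeEquiv fun j => by simp [rotate])

lemma commonEast_comm (P Q : Fin x → Fin (y + 1)) : commonEast P Q = commonEast Q P :=
  Nat.card_congr (Equiv.subtypeEquivRight fun _ => eq_comm)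

lemma commonNorth_comm (P Q : Fin x → Fin (y + 1)) : commonNorth P Q = commonNorth Q P :=
  Nat.card_congr (Equiv.subtypeEquivRight fun _ => eq_comm)

lemma gstat_eq_tail (P : Fin (n + 1) → Fin (y + 1)) (m : Fin y) :
    gstat P m = (if (P 0 : ℕ) ≤ m then 1 else 0) + gstat (Fin.tail P) m :=
  card_fin_succ_subtype fun j => (P j : ℕ) ≤ m

lemma gstat_lower (P : Fin x → Fin (y + 2)) (m : Fin y) : gstat (lower P) m = gstat P m.succ := by
  refine Nat.card_congr (Equiv.subtypeEquivRight fun j => ?_)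
  rw [val_lower, Fin.val_succ, Nat.sub_le_iff_le_add]

lemma ne_zero_of_monotone {P : Fin (n + 1) → Fin (y + 1)} (hP : Monotone P) (hP0 : P 0 ≠ 0)
    (j : Fin (n + 1)) : P j ≠ 0 :=
  fun hj => hP0 (Fin.le_zero_iff.1 (hj ▸ hP (Fin.zero_le j)))

lemma gstat_zero_eq_zero_iff {P : Fin (n + 1) → Fin (y + 2)} (hP : Monotone P) :
    gstat P 0 = 0 ↔ P 0 ≠ 0 := by
  simp only [gstat, Finite.card_eq_zero_iff, isEmpty_subtype, Fin.val_zero, Nat.le_zero,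
    Fin.val_eq_zero_iff]
  exact ⟨fun h => h 0, ne_zero_of_monotone hP⟩

lemma gstat_rotate_add_gstat_rev (P : Fin x → Fin (y + 1)) (m : Fin y) :
    gstat (rotate P) m + gstat P m.rev = x := by
  have hcompl : gstat (rotate P) m = Nat.card {j // ¬ (P j : ℕ) ≤ m.rev} :=
    Nat.card_congr (Fin.revPerm.subtypeEquiv fun j => by
      simp only [rotate, Fin.val_rev, Fin.revPerm_apply]; omega)
  rw [hcompl, gstat, Nat.card_eq_fintype_card, Nat.card_eq_fintype_card, add_comm]
  simp only [Fintype.card_subtype]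
  rw [card_filter_add_card_filter_not, card_fin]

lemma commonNorth_eq_tail {P Q : Fin (n + 1) → Fin (y + 1)} (h : P 0 = Q 0) :
    commonNorth P Q = commonNorth (Fin.tail P) (Fin.tail Q) := by
  refine Nat.card_congr (Equiv.subtypeEquivRight fun m => ?_)
  rw [gstat_eq_tail, gstat_eq_tail, h, add_right_inj]

lemma commonNorth_eq_lower (P Q : Fin x → Fin (y + 2)) :
    commonNorth P Q =
      (if gstat P 0 = gstat Q 0 then 1 else 0) + commonNorth (lower P) (lower Q) := by
  simp only [commonNorth, gstat_lower]
  exact card_fin_succ_subtype fun m => gstat P m = gstat Q m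

lemma commonNorth_rotate (P Q : Fin x → Fin (y + 1)) :
    commonNorth (rotate P) (rotate Q) = commonNorth P Q := by
  refine Nat.card_congr (Fin.revPerm.subtypeEquiv fun m => ?_)
  have hP := gstat_rotate_add_gstat_rev P m
  have hQ := gstat_rotate_add_gstat_rev Q m
  rw [Fin.revPerm_apply]
  omega

end Statistics

section Regions

variable {x y n : ℕ}

/-- `T` and `B` are the upper and the lower boundary of a region of lattice paths. -/
structure IsRegion (T B : Fin x → Fin (y + 1)) : Prop where
  top_mono : Monotone T
  bot_mono : Monotone B
  bot_le_top : B ≤ T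

namespace IsRegion

lemma rectangle (x y : ℕ) : IsRegion (fun _ : Fin x => Fin.last y) fun _ => 0 :=
  ⟨monotone_const, monotone_const, fun _ => Fin.zero_le _⟩

lemma tail {T B : Fin (n + 1) → Fin (y + 1)} (h : IsRegion T B) :
    IsRegion (Fin.tail T) (Fin.tail B) :=
  ⟨h.top_mono.comp (Fin.strictMono_succ).monotone, h.bot_mono.comp (Fin.strictMono_succ).monotone,
    fun j => h.bot_le_top j.succ⟩

lemma lower {T B : Fin x → Fin (y + 2)} (h : IsRegion T B) : IsRegion (lower T) (lower B) :=
  ⟨(Fin.predAbove_right_monotone 0).comp h.top_mono,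
    (Fin.predAbove_right_monotone 0).comp h.bot_mono,
    fun j => Fin.predAbove_right_monotone 0 (h.bot_le_top j)⟩

lemma init {T B : Fin (n + 1) → Fin (y + 1)} (h : IsRegion T B) :
    IsRegion (Fin.init T) (Fin.init B) :=
  ⟨h.top_mono.comp (Fin.strictMono_castSucc).monotone,
    h.bot_mono.comp (Fin.strictMono_castSucc).monotone, fun j => h.bot_le_top j.castSucc⟩

lemma cap {T B : Fin x → Fin (y + 2)} (h : IsRegion T B) : IsRegion (cap T) (cap B) :=
  ⟨(Fin.predAbove_right_monotone _).comp h.top_mono,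
    (Fin.predAbove_right_monotone _).comp h.bot_mono,
    fun j => Fin.predAbove_right_monotone _ (h.bot_le_top j)⟩

lemma rotate {T B : Fin x → Fin (y + 1)} (h : IsRegion T B) : IsRegion (rotate B) (rotate T) :=
  ⟨fun _ _ hij => Fin.rev_le_rev.2 (h.bot_mono (Fin.rev_le_rev.2 hij)),
    fun _ _ hij => Fin.rev_le_rev.2 (h.top_mono (Fin.rev_le_rev.2 hij)),
    fun j => Fin.rev_le_rev.2 (h.bot_le_top j.rev)⟩

end IsRegion

/-- A region in which both the first and the last step of a path can be chosen freely to be an east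
step or a north step. -/
structure HasFreeEnds (T B : Fin (n + 1) → Fin (y + 2)) : Prop extends IsRegion T B where
  top_zero : T 0 ≠ 0
  bot_zero : B 0 = 0
  top_last : T (Fin.last n) = Fin.last (y + 1)
  bot_last : B (Fin.last n) ≠ Fin.last (y + 1)

namespace HasFreeEnds

lemma eq_rectangle {T B : Fin (n + 1) → Fin (y + 2)} (h : HasFreeEnds T B) (hny : n = 0 ∨ y = 0) :
    T = (fun _ => Fin.last (y + 1)) ∧ B = fun _ => 0 := by
  rcases hny with rfl | rfl
  · exact ⟨funext fun j => Fin.fin_one_eq_zero j ▸ h.top_last,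
      funext fun j => Fin.fin_one_eq_zero j ▸ h.bot_zero⟩
  · refine ⟨funext fun j => ?_, funext fun j => ?_⟩
    · exact Fin.eq_one_of_ne_zero _ (ne_zero_of_monotone h.top_mono h.top_zero j)
    · have hj := h.bot_mono (Fin.le_last j)
      have hlast := h.bot_last
      simp only [Fin.le_def, ne_eq, Fin.ext_iff, Fin.val_last, Fin.val_zero] at hj hlast ⊢
      omega

variable {T B : Fin (n + 2) → Fin (y + 3)}

lemma lower_top_last (h : HasFreeEnds T B) :
    LatticePath.lower T (Fin.last (n + 1)) = Fin.last (y + 1) := by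
  ext
  simp [val_lower, h.top_last]

lemma lower_bot_last (h : HasFreeEnds T B) :
    LatticePath.lower B (Fin.last (n + 1)) ≠ Fin.last (y + 1) := by
  have hB := h.bot_last
  simp only [ne_eq, Fin.ext_iff, val_lower, Fin.val_last] at hB ⊢
  omega

lemma cap_top_zero (h : HasFreeEnds T B) : LatticePath.cap T 0 ≠ 0 := by
  have hT := h.top_zero
  simp only [ne_eq, Fin.ext_iff, val_cap, Fin.val_zero] at hT ⊢
  omega

lemma cap_bot_zero (h : HasFreeEnds T B) : LatticePath.cap B 0 = 0 := by
  ext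
  simp [val_cap, h.bot_zero]

end HasFreeEnds

open Classical in
/-- The set `P(T,B)`, as a finset to sum over. -/
noncomputable def pathsBetween (T B : Fin x → Fin (y + 1)) : Finset (Fin x → Fin (y + 1)) :=
  {P | InP T B P}

lemma mem_pathsBetween {T B P : Fin x → Fin (y + 1)} : P ∈ pathsBetween T B ↔ InP T B P := by
  simp [pathsBetween]

lemma _root_.InP.isRegion_top {T B P : Fin x → Fin (y + 1)} (hP : InP T B P) (hT : Monotone T) :
    IsRegion T P :=
  ⟨hT, hP.1, fun j => (hP.2 j).2⟩

lemma _root_.InP.isRegion_bot {T B P : Fin x → Fin (y + 1)} (hP : InP T B P) (hB : Monotone B) :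
    IsRegion P B :=
  ⟨hP.1, hB, fun j => (hP.2 j).1⟩

lemma _root_.InP.rotate {T B P : Fin x → Fin (y + 1)} (hP : InP T B P) :
    InP (rotate B) (rotate T) (rotate P) :=
  ⟨fun _ _ hij => Fin.rev_le_rev.2 (hP.1 (Fin.rev_le_rev.2 hij)),
    fun j => ⟨Fin.rev_le_rev.2 (hP.2 j.rev).2, Fin.rev_le_rev.2 (hP.2 j.rev).1⟩⟩

lemma _root_.InP.tail {T B P : Fin (n + 1) → Fin (y + 1)} (hP : InP T B P) :
    InP (Fin.tail T) (Fin.tail B) (Fin.tail P) :=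
  ⟨hP.1.comp Fin.strictMono_succ.monotone, fun j => hP.2 j.succ⟩

lemma _root_.InP.lower {T B P : Fin x → Fin (y + 2)} (hP : InP T B P) :
    InP (lower T) (lower B) (lower P) :=
  have hmono := Fin.predAbove_right_monotone (0 : Fin (y + 1))
  ⟨hmono.comp hP.1, fun j => ⟨hmono (hP.2 j).1, hmono (hP.2 j).2⟩⟩

lemma inP_cons_zero {T B : Fin (n + 1) → Fin (y + 1)} (hB : B 0 = 0) {P : Fin n → Fin (y + 1)}
    (hP : InP (Fin.tail T) (Fin.tail B) P) :
    InP T B (Fin.cons 0 P : Fin (n + 1) → Fin (y + 1)) := by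
  refine ⟨fun i j hij => ?_, Fin.cases ?_ fun j => ?_⟩
  · cases i using Fin.cases with
    | zero => exact Fin.zero_le _
    | succ i =>
      cases j using Fin.cases with
      | zero => simp at hij
      | succ j => exact hP.1 (Fin.succ_le_succ_iff.1 hij)
  · simp [hB]
  · exact hP.2 j

lemma inP_succ {T B : Fin x → Fin (y + 2)} (hT : ∀ j, T j ≠ 0) {P : Fin x → Fin (y + 1)}
    (hP : InP (lower T) (lower B) P) : InP T B (fun j => (P j).succ) := by
  refine ⟨fun _ _ hij => Fin.succ_le_succ_iff.2 (hP.1 hij), fun j => ?_⟩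
  have hPj := hP.2 j
  have hTj := hT j
  simp only [Fin.le_def, val_lower, Fin.val_succ, ne_eq, Fin.ext_iff, Fin.val_zero] at hPj hTj ⊢
  omega

variable {M : Type*} [AddCommMonoid M]

lemma sum_pathsBetween_rotate (T B : Fin x → Fin (y + 1)) (g : (Fin x → Fin (y + 1)) → M) :
    ∑ P ∈ pathsBetween (rotate B) (rotate T), g P = ∑ P ∈ pathsBetween T B, g (rotate P) := by
  refine sum_nbij' rotate rotate (fun P hP => ?_) (fun P hP => ?_) (fun P _ => rotate_rotate P)
    (fun P _ => rotate_rotate P) (fun P _ => by rw [rotate_rotate])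
  · simpa only [rotate_rotate] using mem_pathsBetween.2 (mem_pathsBetween.1 hP).rotate
  · exact mem_pathsBetween.2 (mem_pathsBetween.1 hP).rotate

lemma sum_pathsBetween_tail {T B : Fin (n + 1) → Fin (y + 1)} (hB : B 0 = 0)
    (g : (Fin n → Fin (y + 1)) → M) :
    ∑ P ∈ pathsBetween T B with P 0 = 0, g (Fin.tail P) =
      ∑ P ∈ pathsBetween (Fin.tail T) (Fin.tail B), g P := by
  simp only [pathsBetween, filter_filter]
  refine sum_nbij' Fin.tail (fun P => Fin.cons 0 P) ?_ ?_ ?_ ?_ fun _ _ => rfl <;>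
    simp only [mem_filter_univ]
  · exact fun P hP => hP.1.tail
  · exact fun P hP => ⟨inP_cons_zero hB hP, rfl⟩
  · exact fun P hP => hP.2 ▸ Fin.cons_self_tail P
  · exact fun P _ => Fin.tail_cons _ _

lemma sum_pathsBetween_lower {T B : Fin (n + 1) → Fin (y + 2)} (hT : Monotone T) (hT0 : T 0 ≠ 0)
    (g : (Fin (n + 1) → Fin (y + 1)) → M) :
    ∑ P ∈ pathsBetween T B with P 0 ≠ 0, g (lower P) =
      ∑ P ∈ pathsBetween (lower T) (lower B), g P := by
  simp only [pathsBetween, filter_filter]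
  refine sum_nbij' lower (fun P j => (P j).succ) ?_ ?_ ?_ ?_ fun _ _ => rfl <;>
    simp only [mem_filter_univ]
  · exact fun P hP => hP.1.lower
  · exact fun P hP => ⟨inP_succ (ne_zero_of_monotone hT hT0) hP, Fin.succ_ne_zero _⟩
  · exact fun P hP => funext fun j => Fin.succ_predAbove_zero (ne_zero_of_monotone hP.1.1 hP.2 j)
  · exact fun P _ => funext fun j => Fin.predAbove_zero_succ

end Regions

section SinglePath

variable {x y n : ℕ} {M : Type*} [AddCommMonoid M]

/-- The sum of `f (t(P)) (r(P))` over all `P ∈ P(T,B)`. -/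
noncomputable def topRightSum (f : ℕ → ℕ → M) (T B : Fin x → Fin (y + 1)) : M :=
  ∑ P ∈ pathsBetween T B, f (commonEast T P) (commonNorth P B)

/-- The sum of `f (b(P)) (ℓ(P))` over all `P ∈ P(T,B)`. -/
noncomputable def bottomLeftSum (f : ℕ → ℕ → M) (T B : Fin x → Fin (y + 1)) : M :=
  ∑ P ∈ pathsBetween T B, f (commonEast P B) (commonNorth T P)

lemma topRightSum_rotate (f : ℕ → ℕ → M) (T B : Fin x → Fin (y + 1)) :
    topRightSum f (rotate B) (rotate T) = bottomLeftSum f T B := by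
  rw [topRightSum, sum_pathsBetween_rotate, bottomLeftSum]
  simp only [commonEast_rotate, commonNorth_rotate, commonEast_comm B, commonNorth_comm _ T]

lemma bottomLeftSum_rotate (f : ℕ → ℕ → M) (T B : Fin x → Fin (y + 1)) :
    bottomLeftSum f (rotate B) (rotate T) = topRightSum f T B := by
  rw [← topRightSum_rotate, rotate_rotate, rotate_rotate]

lemma pathsBetween_filter_zero {T B : Fin (n + 1) → Fin (y + 1)} (hT : T 0 = 0) :
    {P ∈ pathsBetween T B | P 0 = 0} = pathsBetween T B :=
  filter_true_of_mem fun _ hP =>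
    Fin.le_zero_iff.1 (hT ▸ ((mem_pathsBetween.1 hP).2 0).2)

lemma pathsBetween_filter_ne_zero {T B : Fin (n + 1) → Fin (y + 1)} (hB : B 0 ≠ 0) :
    {P ∈ pathsBetween T B | P 0 ≠ 0} = pathsBetween T B :=
  filter_true_of_mem fun _ hP hP0 =>
    hB (Fin.le_zero_iff.1 (hP0 ▸ ((mem_pathsBetween.1 hP).2 0).1))

lemma topRightSum_of_top_zero (f : ℕ → ℕ → M) {T B : Fin (n + 1) → Fin (y + 1)}
    (h : IsRegion T B) (hT : T 0 = 0) :
    topRightSum f T B = topRightSum (fun a c => f (a + 1) c) (Fin.tail T) (Fin.tail B) := by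
  have hB : B 0 = 0 := Fin.le_zero_iff.1 (hT ▸ h.bot_le_top 0)
  rw [topRightSum, topRightSum, ← pathsBetween_filter_zero hT, ← sum_pathsBetween_tail hB]
  refine sum_congr rfl fun P hP => ?_
  have hP0 := (mem_filter.1 hP).2
  rw [commonEast_eq_tail, if_pos (hT.trans hP0.symm), commonNorth_eq_tail (hP0.trans hB.symm),
    add_comm]

lemma bottomLeftSum_of_top_zero (f : ℕ → ℕ → M) {T B : Fin (n + 1) → Fin (y + 1)}
    (h : IsRegion T B) (hT : T 0 = 0) :
    bottomLeftSum f T B = bottomLeftSum (fun a c => f (a + 1) c) (Fin.tail T) (Fin.tail B) := by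
  have hB : B 0 = 0 := Fin.le_zero_iff.1 (hT ▸ h.bot_le_top 0)
  rw [bottomLeftSum, bottomLeftSum, ← pathsBetween_filter_zero hT, ← sum_pathsBetween_tail hB]
  refine sum_congr rfl fun P hP => ?_
  have hP0 := (mem_filter.1 hP).2
  rw [commonEast_eq_tail, if_pos (hP0.trans hB.symm), commonNorth_eq_tail (hT.trans hP0.symm),
    add_comm]

lemma topRightSum_of_bot_ne_zero (f : ℕ → ℕ → M) {T B : Fin (n + 1) → Fin (y + 2)}
    (h : IsRegion T B) (hB : B 0 ≠ 0) :
    topRightSum f T B = topRightSum (fun a c => f a (c + 1)) (lower T) (lower B) := by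
  have hT : T 0 ≠ 0 := fun hT => hB (Fin.le_zero_iff.1 (hT ▸ h.bot_le_top 0))
  rw [topRightSum, topRightSum, ← pathsBetween_filter_ne_zero hB,
    ← sum_pathsBetween_lower h.top_mono hT]
  refine sum_congr rfl fun P hP => ?_
  rw [mem_filter, mem_pathsBetween] at hP
  rw [commonEast_lower (ne_zero_of_monotone h.top_mono hT) (ne_zero_of_monotone hP.1.1 hP.2),
    commonNorth_eq_lower, (gstat_zero_eq_zero_iff hP.1.1).2 hP.2,
    (gstat_zero_eq_zero_iff h.bot_mono).2 hB, if_pos rfl, add_comm 1]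

lemma bottomLeftSum_of_bot_ne_zero (f : ℕ → ℕ → M) {T B : Fin (n + 1) → Fin (y + 2)}
    (h : IsRegion T B) (hB : B 0 ≠ 0) :
    bottomLeftSum f T B = bottomLeftSum (fun a c => f a (c + 1)) (lower T) (lower B) := by
  have hT : T 0 ≠ 0 := fun hT => hB (Fin.le_zero_iff.1 (hT ▸ h.bot_le_top 0))
  rw [bottomLeftSum, bottomLeftSum, ← pathsBetween_filter_ne_zero hB,
    ← sum_pathsBetween_lower h.top_mono hT]
  refine sum_congr rfl fun P hP => ?_
  rw [mem_filter, mem_pathsBetween] at hP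
  rw [commonEast_lower (ne_zero_of_monotone hP.1.1 hP.2) (ne_zero_of_monotone h.bot_mono hB),
    commonNorth_eq_lower, (gstat_zero_eq_zero_iff hP.1.1).2 hP.2,
    (gstat_zero_eq_zero_iff h.top_mono).2 hT, if_pos rfl, add_comm 1]

lemma topRightSum_eq_tail_add_lower (f : ℕ → ℕ → M) {T B : Fin (n + 1) → Fin (y + 2)}
    (h : IsRegion T B) (hT : T 0 ≠ 0) (hB : B 0 = 0) :
    topRightSum f T B =
      topRightSum f (Fin.tail T) (Fin.tail B) + topRightSum f (lower T) (lower B) := by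
  rw [topRightSum, topRightSum, topRightSum, ← sum_filter_add_sum_filter_not _ (fun P => P 0 = 0),
    ← sum_pathsBetween_tail hB, ← sum_pathsBetween_lower h.top_mono hT]
  congr 1 <;> refine sum_congr rfl fun P hP => ?_ <;> rw [mem_filter, mem_pathsBetween] at hP
  · rw [commonEast_eq_tail, if_neg (hP.2 ▸ hT), zero_add, commonNorth_eq_tail (hP.2.trans hB.symm)]
  · have hg : gstat P 0 ≠ gstat B 0 := fun hg =>
      (gstat_zero_eq_zero_iff h.bot_mono).1
        (hg ▸ (gstat_zero_eq_zero_iff hP.1.1).2 hP.2) hB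
    rw [commonEast_lower (ne_zero_of_monotone h.top_mono hT) (ne_zero_of_monotone hP.1.1 hP.2),
      commonNorth_eq_lower, if_neg hg, zero_add]

lemma bottomLeftSum_eq_init_add_cap (f : ℕ → ℕ → M) {T B : Fin (n + 1) → Fin (y + 2)}
    (h : IsRegion T B) (hT : T (Fin.last n) = Fin.last (y + 1))
    (hB : B (Fin.last n) ≠ Fin.last (y + 1)) :
    bottomLeftSum f T B =
      bottomLeftSum f (Fin.init T) (Fin.init B) + bottomLeftSum f (cap T) (cap B) := by
  have hT' : rotate T 0 = 0 := by rw [rotate_zero, hT, Fin.rev_last]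
  have hB' : rotate B 0 ≠ 0 := by rwa [rotate_zero, ne_eq, Fin.rev_eq_iff, Fin.rev_zero]
  rw [← topRightSum_rotate, topRightSum_eq_tail_add_lower f h.rotate hB' hT']
  simp only [tail_rotate, lower_rotate, topRightSum_rotate]

/-- The two statistics `(t, r)` and `(b, ℓ)` are equidistributed over `P(T,B)`, in the form of an
equality of weighted sums for every weight `f`. -/
def Equidistributed (M : Type*) [AddCommMonoid M] (T B : Fin x → Fin (y + 1)) : Prop :=
  ∀ f : ℕ → ℕ → M, topRightSum f T B = bottomLeftSum f T B

namespace Equidistributed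

lemma of_rotate {T B : Fin x → Fin (y + 1)} (h : Equidistributed M (rotate B) (rotate T)) :
    Equidistributed M T B := fun f => by
  rw [← bottomLeftSum_rotate, ← topRightSum_rotate f T B, h f]

lemma of_tail {T B : Fin (n + 1) → Fin (y + 1)} (h : IsRegion T B) (hT : T 0 = 0)
    (ih : Equidistributed M (Fin.tail T) (Fin.tail B)) : Equidistributed M T B := fun f => by
  rw [topRightSum_of_top_zero f h hT, bottomLeftSum_of_top_zero f h hT, ih]

lemma of_lower {T B : Fin (n + 1) → Fin (y + 2)} (h : IsRegion T B) (hB : B 0 ≠ 0)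
    (ih : Equidistributed M (lower T) (lower B)) : Equidistributed M T B := fun f => by
  rw [topRightSum_of_bot_ne_zero f h hB, bottomLeftSum_of_bot_ne_zero f h hB, ih]

lemma of_width_zero (T B : Fin 0 → Fin (y + 1)) : Equidistributed M T B := fun f => by
  simp only [topRightSum, bottomLeftSum, commonEast, commonNorth, gstat, Nat.card_of_isEmpty]

lemma rectangle : ∀ x y : ℕ, Equidistributed M (fun _ : Fin x => Fin.last y) (fun _ => 0)
  | 0, _ => of_width_zero _ _
  | n + 1, 0 => of_tail (.rectangle _ _) rfl (rectangle n 0)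
  | n + 1, y + 1 => fun f => by
    rw [topRightSum_eq_tail_add_lower f (.rectangle _ _) (Fin.last_pos.ne') rfl,
      bottomLeftSum_eq_init_add_cap f (.rectangle _ _) rfl Fin.last_pos.ne,
      lower_const_last, cap_const_last, lower_const_zero, cap_const_zero,
      ← rectangle (n + 1) y f]
    exact congrArg (· + _) (rectangle n (y + 1) f)

lemma of_not_hasFreeEnds {T B : Fin (n + 1) → Fin (y + 2)} (h : IsRegion T B)
    (hfree : ¬ HasFreeEnds T B)
    (ih : ∀ x' y', x' + y' < n + 1 + (y + 1) → ∀ T' B' : Fin x' → Fin (y' + 1),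
      IsRegion T' B' → Equidistributed M T' B') : Equidistributed M T B := by
  by_cases hT0 : T 0 = 0
  · exact of_tail h hT0 (ih _ _ (by omega) _ _ h.tail)
  by_cases hB0 : B 0 = 0
  swap
  · exact of_lower h hB0 (ih _ _ (by omega) _ _ h.lower)
  refine of_rotate ?_
  by_cases hBlast : B (Fin.last n) = Fin.last (y + 1)
  · exact of_tail h.rotate (by rw [rotate_zero, hBlast, Fin.rev_last])
      (ih _ _ (by omega) _ _ h.rotate.tail)
  · have hTlast : T (Fin.last n) ≠ Fin.last (y + 1) := fun hTlast =>
      hfree ⟨h, hT0, hB0, hTlast, hBlast⟩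
    exact of_lower h.rotate (by rwa [rotate_zero, ne_eq, Fin.rev_eq_iff, Fin.rev_zero])
      (ih _ _ (by omega) _ _ h.rotate.lower)

lemma of_hasFreeEnds {T B : Fin (n + 2) → Fin (y + 3)} (h : HasFreeEnds T B)
    (ih : ∀ x' y', x' + y' < n + 2 + (y + 2) → ∀ T' B' : Fin x' → Fin (y' + 1),
      IsRegion T' B' → Equidistributed M T' B') : Equidistributed M T B := fun f => by
  have hreg := h.toIsRegion
  calc
    topRightSum f T B
      = bottomLeftSum f (Fin.tail T) (Fin.tail B) + bottomLeftSum f (lower T) (lower B) := by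
        rw [topRightSum_eq_tail_add_lower f hreg h.top_zero h.bot_zero,
          ih _ _ (by omega) _ _ hreg.tail, ih _ _ (by omega) _ _ hreg.lower]
    _ = (topRightSum f (Fin.init (Fin.tail T)) (Fin.init (Fin.tail B))
          + topRightSum f (cap (Fin.tail T)) (cap (Fin.tail B)))
        + (topRightSum f (Fin.init (lower T)) (Fin.init (lower B))
          + topRightSum f (cap (lower T)) (cap (lower B))) := by
        rw [bottomLeftSum_eq_init_add_cap f hreg.tail h.top_last h.bot_last,
          bottomLeftSum_eq_init_add_cap f hreg.lower h.lower_top_last h.lower_bot_last,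
          ih _ _ (by omega) _ _ hreg.tail.init, ih _ _ (by omega) _ _ hreg.tail.cap,
          ih _ _ (by omega) _ _ hreg.lower.init, ih _ _ (by omega) _ _ hreg.lower.cap]
    _ = (topRightSum f (Fin.tail (Fin.init T)) (Fin.tail (Fin.init B))
          + topRightSum f (lower (Fin.init T)) (lower (Fin.init B)))
        + (topRightSum f (Fin.tail (cap T)) (Fin.tail (cap B))
          + topRightSum f (lower (cap T)) (lower (cap B))) := by
        rw [add_add_add_comm, lower_cap, lower_cap]
        rfl
    _ = bottomLeftSum f (Fin.init T) (Fin.init B) + bottomLeftSum f (cap T) (cap B) := by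
        rw [← topRightSum_eq_tail_add_lower f hreg.init h.top_zero h.bot_zero,
          ← topRightSum_eq_tail_add_lower f hreg.cap h.cap_top_zero h.cap_bot_zero,
          ih _ _ (by omega) _ _ hreg.init, ih _ _ (by omega) _ _ hreg.cap]
    _ = bottomLeftSum f T B :=
        (bottomLeftSum_eq_init_add_cap f hreg h.top_last h.bot_last).symm

end Equidistributed

theorem IsRegion.equidistributed (M : Type*) [AddCommMonoid M] {T B : Fin x → Fin (y + 1)}
    (h : IsRegion T B) : Equidistributed M T B := by
  induction hs : x + y using Nat.strong_induction_on generalizing x y with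
  | _ s ih =>
    subst hs
    replace ih : ∀ x' y', x' + y' < x + y → ∀ T' B' : Fin x' → Fin (y' + 1),
        IsRegion T' B' → Equidistributed M T' B' :=
      fun _ _ hlt _ _ h' => ih _ hlt h' rfl
    obtain _ | n := x
    · exact .of_width_zero T B
    obtain _ | y := y
    · exact .of_tail h (Fin.fin_one_eq_zero _) (ih _ _ (by omega) _ _ h.tail)
    by_cases hfree : HasFreeEnds T B
    · by_cases hny : n = 0 ∨ y = 0
      · rw [(hfree.eq_rectangle hny).1, (hfree.eq_rectangle hny).2]
        exact .rectangle _ _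
      · obtain ⟨n, rfl⟩ := Nat.exists_eq_succ_of_ne_zero (not_or.1 hny).1
        obtain ⟨y, rfl⟩ := Nat.exists_eq_succ_of_ne_zero (not_or.1 hny).2
        exact .of_hasFreeEnds hfree ih
    · exact .of_not_hasFreeEnds h hfree ih

end SinglePath

section Tuples

variable {x y k : ℕ}

lemma _root_.InPk.antitone {T B : Fin x → Fin (y + 1)} {P : Fin k → Fin x → Fin (y + 1)}
    (hP : InPk T B P) : Antitone P := by
  obtain _ | k := k
  · exact Subsingleton.antitone P
  · exact Fin.antitone_iff_succ_le.2 fun i j => hP.2 i.castSucc (by simp) j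

lemma inPk_cons_iff {T B v : Fin x → Fin (y + 1)} {P : Fin k → Fin x → Fin (y + 1)} :
    InPk T B (Fin.cons v P : Fin (k + 1) → Fin x → Fin (y + 1)) ↔ InP T B v ∧ InPk v B P := by
  constructor
  · intro h
    refine ⟨h.1 0, fun i => ⟨(h.1 i.succ).1, fun j => ⟨((h.1 i.succ).2 j).1,
      h.antitone (Fin.zero_le i.succ) j⟩⟩, fun i hi j => ?_⟩
    exact h.2 i.succ (by simpa using hi) j
  · rintro ⟨hv, hP⟩
    refine ⟨Fin.cases hv fun i => ⟨(hP.1 i).1, fun j => ⟨((hP.1 i).2 j).1,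
      ((hP.1 i).2 j).2.trans (hv.2 j).2⟩⟩, Fin.cases (fun hi j => ?_) fun i hi j => ?_⟩
    · exact ((hP.1 ⟨0, by simpa using hi⟩).2 j).2
    · exact hP.2 i (by simpa using hi) j

lemma extP_cons (T B v : Fin x → Fin (y + 1)) (P : Fin k → Fin x → Fin (y + 1)) :
    extP T B (Fin.cons v P : Fin (k + 1) → Fin x → Fin (y + 1)) = Fin.cons T (extP v B P) := by
  funext i
  refine Fin.cases rfl (fun i => ?_) i
  rw [Fin.cons_succ]
  refine Fin.cases (by simp [extP]) (fun i => ?_) i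
  simp only [extP, Fin.val_succ, Nat.add_eq_zero_iff, one_ne_zero, and_false, dite_false,
    Nat.add_right_cancel_iff]
  rfl

lemma hstat_cons_zero (T B v : Fin x → Fin (y + 1)) (P : Fin k → Fin x → Fin (y + 1)) :
    hstat T B (Fin.cons v P : Fin (k + 1) → Fin x → Fin (y + 1)) 0 = commonEast T v := by
  rw [hstat, extP_cons]
  rfl

lemma vstat_cons_zero (T B v : Fin x → Fin (y + 1)) (P : Fin k → Fin x → Fin (y + 1)) :
    vstat T B (Fin.cons v P : Fin (k + 1) → Fin x → Fin (y + 1)) 0 = commonNorth T v := by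
  rw [vstat, extP_cons]
  rfl

lemma hstat_cons_last (T B v : Fin x → Fin (y + 1)) (P : Fin k → Fin x → Fin (y + 1)) :
    hstat T B (Fin.cons v P : Fin (k + 1) → Fin x → Fin (y + 1)) (Fin.last (k + 1)) =
      hstat v B P (Fin.last k) := by
  rw [hstat, extP_cons]
  rfl

lemma vstat_cons_last (T B v : Fin x → Fin (y + 1)) (P : Fin k → Fin x → Fin (y + 1)) :
    vstat T B (Fin.cons v P : Fin (k + 1) → Fin x → Fin (y + 1)) (Fin.last (k + 1)) =
      vstat v B P (Fin.last k) := by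
  rw [vstat, extP_cons]
  rfl

open Classical in
/-- The set `P^k(T,B)`, as a finset to sum over. -/
noncomputable def tuplesBetween (k : ℕ) (T B : Fin x → Fin (y + 1)) :
    Finset (Fin k → Fin x → Fin (y + 1)) :=
  {P | InPk T B P}

lemma mem_tuplesBetween {T B : Fin x → Fin (y + 1)} {P : Fin k → Fin x → Fin (y + 1)} :
    P ∈ tuplesBetween k T B ↔ InPk T B P := by
  simp [tuplesBetween]

variable {M : Type*} [AddCommMonoid M]

lemma sum_tuplesBetween_zero (T B : Fin x → Fin (y + 1))
    (g : (Fin 0 → Fin x → Fin (y + 1)) → M) : ∑ P ∈ tuplesBetween 0 T B, g P = g Fin.elim0 := by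
  have hmem : InPk T B (Fin.elim0 : Fin 0 → Fin x → Fin (y + 1)) :=
    ⟨fun i => i.elim0, fun i => i.elim0⟩
  rw [← sum_singleton g Fin.elim0]
  refine sum_congr (ext fun P => ?_) fun _ _ => rfl
  rw [mem_tuplesBetween, mem_singleton, Subsingleton.elim P Fin.elim0]
  exact iff_of_true hmem rfl

lemma sum_tuplesBetween_succ (T B : Fin x → Fin (y + 1))
    (g : (Fin (k + 1) → Fin x → Fin (y + 1)) → M) :
    ∑ P ∈ tuplesBetween (k + 1) T B, g P =
      ∑ v ∈ pathsBetween T B, ∑ P ∈ tuplesBetween k v B, g (Fin.cons v P) := by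
  rw [sum_sigma']
  refine sum_nbij' (fun P => ⟨P 0, Fin.tail P⟩) (fun vP => Fin.cons vP.1 vP.2) ?_ ?_ ?_ ?_ ?_
  · intro P hP
    rw [mem_tuplesBetween, ← Fin.cons_self_tail P, inPk_cons_iff] at hP
    simpa only [mem_sigma, mem_pathsBetween, mem_tuplesBetween] using hP
  · intro vP hvP
    simpa only [mem_sigma, mem_pathsBetween, mem_tuplesBetween, inPk_cons_iff] using hvP
  · exact fun P _ => Fin.cons_self_tail P
  · exact fun _ _ => rfl
  · exact fun P _ => congrArg g (Fin.cons_self_tail P).symm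

lemma inP_and_inP_iff {T B v w : Fin x → Fin (y + 1)} :
    InP T B v ∧ InP v B w ↔ InP T w v ∧ InP T B w := by
  constructor
  · rintro ⟨hv, hw⟩
    exact ⟨⟨hv.1, fun j => ⟨(hw.2 j).2, (hv.2 j).2⟩⟩,
      hw.1, fun j => ⟨(hw.2 j).1, (hw.2 j).2.trans (hv.2 j).2⟩⟩
  · rintro ⟨hv, hw⟩
    exact ⟨⟨hv.1, fun j => ⟨(hw.2 j).1.trans (hv.2 j).1, (hv.2 j).2⟩⟩,
      hw.1, fun j => ⟨(hw.2 j).1, (hv.2 j).1⟩⟩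

lemma sum_pathsBetween_comm {T B : Fin x → Fin (y + 1)}
    (g : (Fin x → Fin (y + 1)) → (Fin x → Fin (y + 1)) → M) :
    ∑ v ∈ pathsBetween T B, ∑ w ∈ pathsBetween v B, g v w =
      ∑ w ∈ pathsBetween T B, ∑ v ∈ pathsBetween T w, g v w :=
  sum_comm' fun v w => by simp only [mem_pathsBetween, inP_and_inP_iff]

-- Only `v` has to move: apply the single-path theorem between `T` and the path below `v`.
lemma sum_hstat_zero_commonNorth (f : ℕ → ℕ → M) {T B : Fin x → Fin (y + 1)}
    (h : IsRegion T B) :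
    ∑ v ∈ pathsBetween T B, ∑ P ∈ tuplesBetween k v B, f (hstat v B P 0) (commonNorth T v) =
      ∑ v ∈ pathsBetween T B, ∑ P ∈ tuplesBetween k v B, f (commonEast T v) (vstat v B P 0) := by
  obtain _ | k := k
  · simp only [sum_tuplesBetween_zero]
    exact (h.equidistributed M f).symm
  · simp only [sum_tuplesBetween_succ, hstat_cons_zero, vstat_cons_zero]
    rw [sum_pathsBetween_comm, sum_pathsBetween_comm]
    refine sum_congr rfl fun w hw => ?_
    rw [sum_comm, sum_comm (s := pathsBetween T w)]
    have hTw : IsRegion T w := (mem_pathsBetween.1 hw).isRegion_top h.top_mono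
    exact sum_congr rfl fun _ _ => (hTw.equidistributed M f).symm

theorem sum_hstat_last_vstat_zero (f : ℕ → ℕ → M) {T B : Fin x → Fin (y + 1)}
    (h : IsRegion T B) :
    ∑ P ∈ tuplesBetween k T B, f (hstat T B P (Fin.last k)) (vstat T B P 0) =
      ∑ P ∈ tuplesBetween k T B, f (hstat T B P 0) (vstat T B P (Fin.last k)) := by
  induction k generalizing f T with
  | zero => rfl
  | succ k ih =>
    have hbelow {v} (hv : v ∈ pathsBetween T B) : IsRegion v B :=
      (mem_pathsBetween.1 hv).isRegion_bot h.bot_mono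
    simp only [sum_tuplesBetween_succ, hstat_cons_zero, vstat_cons_zero, hstat_cons_last,
      vstat_cons_last]
    calc
      ∑ v ∈ pathsBetween T B, ∑ P ∈ tuplesBetween k v B,
          f (hstat v B P (Fin.last k)) (commonNorth T v)
        = ∑ v ∈ pathsBetween T B, ∑ P ∈ tuplesBetween k v B,
            f (hstat v B P 0) (commonNorth T v) :=
          sum_congr rfl fun v hv => ih (fun a _ => f a (commonNorth T v)) (hbelow hv)
      _ = ∑ v ∈ pathsBetween T B, ∑ P ∈ tuplesBetween k v B,
            f (commonEast T v) (vstat v B P 0) := sum_hstat_zero_commonNorth f h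
      _ = ∑ v ∈ pathsBetween T B, ∑ P ∈ tuplesBetween k v B,
            f (commonEast T v) (vstat v B P (Fin.last k)) :=
          sum_congr rfl fun v hv => ih (fun _ c => f (commonEast T v) c) (hbelow hv)

lemma natCard_inPk_and (T B : Fin x → Fin (y + 1)) (p : (Fin k → Fin x → Fin (y + 1)) → Prop)
    [DecidablePred p] :
    Nat.card {P // InPk T B P ∧ p P} = ∑ P ∈ tuplesBetween k T B, if p P then 1 else 0 := by
  classical
  rw [← card_filter, tuplesBetween, filter_filter, ← Fintype.card_subtype,
    Nat.card_eq_fintype_card]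

end Tuples

end LatticePath

/-- The pairs `(b, ℓ) = (h_k, v_0)` and `(t, r) = (h_0, v_k)` have the same joint
distribution over `P^k(T,B)`. -/
theorem stmt3 {x y : ℕ} (k : ℕ) (hk : 1 ≤ k) (T B : Fin x → Fin (y+1))
    (hT : Monotone T) (hB : Monotone B) (hTB : ∀ j, B j ≤ T j) (a c : ℕ) :
    Nat.card {P : Fin k → Fin x → Fin (y+1) //
        InPk T B P ∧ hstat T B P (Fin.last k) = a ∧ vstat T B P 0 = c}
    = Nat.card {P : Fin k → Fin x → Fin (y+1) //
        InPk T B P ∧ hstat T B P 0 = a ∧ vstat T B P (Fin.last k) = c} := by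
  classical
  rw [LatticePath.natCard_inPk_and, LatticePath.natCard_inPk_and]
  exact LatticePath.sum_hstat_last_vstat_zero (fun a' c' => if a' = a ∧ c' = c then 1 else 0)
    ⟨hT, hB, hTB⟩
end

section
/- Let n ≥ 1 and D ⊆ {1,…,n−1}. For all natural numbers e and f, the number of permutations π of {1,…,n} whose set of occurrence positions of the pattern 13-2 equals D and which have exactly e right-to-left minima and exactly f right-to-left maxima equals the number of permutations π of {1,…,n} whose set of occurrence positions of the pattern 13-2 equals D and which have exactly f right-to-left minima and exactly e right-to-left maxima. (On permutations with prescribed occurrence positions of 13-2, the joint distribution of the number of right-to-left minima and the number of right-to-left maxima is symmetric.) -/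
/-- The number of right-to-left minima of a permutation `π` of `{1,…,n}`
(identified with `Fin n`). -/
noncomputable def rlMinCount (n : ℕ) (π : Equiv.Perm (Fin n)) : ℕ :=
  Nat.card {i : Fin n // ∀ j : Fin n, i < j → π i < π j}

/-- The number of right-to-left maxima of a permutation `π` of `{1,…,n}`. -/
noncomputable def rlMaxCount (n : ℕ) (π : Equiv.Perm (Fin n)) : ℕ :=
  Nat.card {i : Fin n // ∀ j : Fin n, i < j → π j < π i}

/-- The set of positions `i ∈ {1,…,n-1}` (encoded by `i-1 : Fin (n-1)`) where
`π` has an occurrence of the dashed pattern 13-2, i.e. there is `j > i+1` with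
`π(i) < π(j) < π(i+1)`. -/
def occSet (n : ℕ) (π : Equiv.Perm (Fin n)) : Set (Fin (n-1)) :=
  {i | ∃ j : Fin n, (i : ℕ) + 1 < (j : ℕ) ∧
    π ⟨(i : ℕ), by have := i.isLt; omega⟩ < π j ∧
    π j < π ⟨(i : ℕ) + 1, by have := i.isLt; omega⟩}

/-!
Build `π` from right to left, keeping only the relative order of the entries. The leading values
of the successive suffixes form a sequence `b₁, …, bₙ` with `0 ≤ bᵢ < i`; the right-to-left minima
are the `bᵢ = 0`, the right-to-left maxima are the `bᵢ = i - 1`, and prepending a value creates an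
occurrence of 13-2 exactly when it lies strictly below its predecessor. Prescribing the occurrences
is thus prescribing the strict descents of `b`, and inclusion–exclusion reduces the claim to weakly
increasing runs whose first entry is unrestricted below. In the generating function of such a run
the numbers of zeros and of maximal entries enter only through complete homogeneous symmetric
polynomials in the two variables.
-/

open Finset

section Runs

variable {R : Type*} [CommSemiring R]

/-- The weight of an entry `b` of a sequence when the largest admissible value is `m`: the variable
`x` marks a zero and `y` marks a maximal entry. -/
def entryWeight (x y : R) (m b : ℕ) : R :=
  (if b = 0 then x else 1) * (if b = m then y else 1)

/-- The generating function `runSum x y k m a` of the runs `a ≤ b₀ ≤ b₁ ≤ ⋯ ≤ b_{k-1}` with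
`bᵢ ≤ m + i`, weighted by the product of the `entryWeight x y (m + i) bᵢ`. -/
def runSum (x y : R) : ℕ → ℕ → ℕ → R
  | 0, _, _ => 1
  | k + 1, m, a => ∑ b ∈ Ico a (m + 1), entryWeight x y m b * runSum x y k (m + 1) b

theorem runSum_succ_of_pos (x y : R) (k : ℕ) {m a : ℕ} (ha : 1 ≤ a) (ham : a ≤ m) :
    runSum x y (k + 1) m a =
      ∑ b ∈ Ico a m, runSum x y k (m + 1) b + y * runSum x y k (m + 1) m := by
  rw [runSum, sum_Ico_succ_top ham]
  congr 1
  · refine sum_congr rfl fun b hb => ?_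
    obtain ⟨hab, hbm⟩ := mem_Ico.1 hb
    simp [entryWeight, hbm.ne, show b ≠ 0 by omega]
  · simp [entryWeight, show m ≠ 0 by omega]

theorem runSum_succ_zero (x y : R) (k : ℕ) {m : ℕ} (hm : 1 ≤ m) :
    runSum x y (k + 1) m 0 = x * runSum x y k (m + 1) 0 + runSum x y (k + 1) m 1 := by
  rw [runSum, runSum, sum_eq_sum_Ico_succ_bot (by omega)]
  simp [entryWeight, show 0 ≠ m by omega]

-- Setting `y = 0` keeps the runs without a maximal entry; from the others, delete the first one.
theorem runSum_succ_eq_add_mul (x x' y : R) (k : ℕ) {m a : ℕ} (ha : 1 ≤ a) (ham : a ≤ m) :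
    runSum x y (k + 1) m a = runSum x' 0 (k + 1) m a + y * runSum x y k (m + 1) a := by
  induction k generalizing m a with
  | zero =>
    rw [runSum_succ_of_pos x y 0 ha ham, runSum_succ_of_pos x' 0 0 ha ham]
    simp [runSum]
  | succ k ih =>
    have expand_lower : ∑ b ∈ Ico a m, runSum x y (k + 1) (m + 1) b =
        ∑ b ∈ Ico a m, runSum x' 0 (k + 1) (m + 1) b +
          y * ∑ b ∈ Ico a m, runSum x y k (m + 2) b := by
      rw [mul_sum, ← sum_add_distrib]
      refine sum_congr rfl fun b hb => ?_
      obtain ⟨hab, hbm⟩ := mem_Ico.1 hb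
      exact ih (ha.trans hab) (by omega)
    have split_top := runSum_succ_of_pos x y k ha (ham.trans m.le_succ)
    rw [sum_Ico_succ_top ham] at split_top
    rw [runSum_succ_of_pos x y (k + 1) ha ham, runSum_succ_of_pos x' 0 (k + 1) ha ham, split_top,
      expand_lower, runSum_succ_of_pos x y k (ha.trans ham) m.le_succ, Nat.Ico_succ_singleton,
      sum_singleton]
    ring

theorem runSum_one_eq_sum_antidiagonal (x y : R) (k : ℕ) {m : ℕ} (hm : 1 ≤ m) :
    runSum x y k m 1 = ∑ p ∈ antidiagonal k, y ^ p.1 * runSum 0 0 p.2 (m + p.1) 1 := by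
  induction k generalizing m with
  | zero => simp [runSum]
  | succ k ih =>
    rw [runSum_succ_eq_add_mul x 0 y k le_rfl hm, ih (by omega), Nat.sum_antidiagonal_succ, mul_sum]
    simp [pow_succ', mul_assoc, add_comm, add_left_comm]

theorem sum_antidiagonal_pow_mul_pow_succ (x y : R) (n : ℕ) :
    ∑ q ∈ antidiagonal (n + 1), x ^ q.1 * y ^ q.2 =
      y ^ (n + 1) + x * ∑ q ∈ antidiagonal n, x ^ q.1 * y ^ q.2 := by
  rw [Nat.sum_antidiagonal_succ, mul_sum]
  simp [pow_succ', mul_assoc]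

theorem runSum_zero_eq_sum_antidiagonal (x y : R) (k : ℕ) {m : ℕ} (hm : 1 ≤ m) :
    runSum x y k m 0 = ∑ p ∈ antidiagonal k,
      (∑ q ∈ antidiagonal p.1, x ^ q.1 * y ^ q.2) * runSum 0 0 p.2 (m + p.1) 1 := by
  induction k generalizing m with
  | zero => simp [runSum]
  | succ k ih =>
    rw [runSum_succ_zero x y k hm, ih (by omega), runSum_one_eq_sum_antidiagonal x y (k + 1) hm,
      Nat.sum_antidiagonal_succ, Nat.sum_antidiagonal_succ, mul_sum, add_left_comm,
      ← sum_add_distrib]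
    simp only [sum_antidiagonal_pow_mul_pow_succ]
    refine congrArg₂ _ (by simp) (sum_congr rfl fun p _ => ?_)
    rw [add_right_comm m 1, add_assoc m p.1]
    ring

theorem runSum_zero_comm (x y : R) (k : ℕ) {m : ℕ} (hm : 1 ≤ m) :
    runSum x y k m 0 = runSum y x k m 0 := by
  rw [runSum_zero_eq_sum_antidiagonal x y k hm, runSum_zero_eq_sum_antidiagonal y x k hm]
  refine sum_congr rfl fun p _ => ?_
  rw [← Nat.sum_antidiagonal_swap]
  simp only [Prod.fst_swap, Prod.snd_swap, mul_comm]

theorem sum_fin_le_eq_runSum (x y : R) (k n a : ℕ) :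
    ∑ b : Fin (n + 1) with a ≤ b.val, entryWeight x y n b * runSum x y k (n + 1) b =
      runSum x y (k + 1) n a := by
  rw [sum_filter, Fin.sum_univ_eq_sum_range
    (fun b => if a ≤ b then entryWeight x y n b * runSum x y k (n + 1) b else 0), ← sum_filter,
    runSum]
  congr 1
  ext b
  simp [and_comm]

theorem sum_fin_lt_add_runSum (x y : R) (k n a : ℕ) :
    ∑ b : Fin (n + 1) with b.val < a, entryWeight x y n b * runSum x y k (n + 1) b +
      runSum x y (k + 1) n a = runSum x y (k + 1) n 0 := by
  rw [← sum_fin_le_eq_runSum x y k n a, ← sum_fin_le_eq_runSum x y k n 0]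
  simp only [← not_lt (b := a), Nat.zero_le, filter_true]
  exact sum_filter_add_sum_filter_not _ _ _

end Runs

section PermCons

/-- The permutation of `Fin (n + 1)` with first value `b` whose remaining values are ordered like
those of `σ`. -/
def permCons {n : ℕ} (b : Fin (n + 1)) (σ : Equiv.Perm (Fin n)) : Equiv.Perm (Fin (n + 1)) :=
  ((finSuccEquiv' 0).trans (Equiv.optionCongr σ)).trans (finSuccEquiv' b).symm

variable {n : ℕ} (b : Fin (n + 1)) (σ : Equiv.Perm (Fin n))

@[simp]
theorem permCons_zero : permCons b σ 0 = b := by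
  simp [permCons]

@[simp]
theorem permCons_succ (i : Fin n) : permCons b σ i.succ = b.succAbove (σ i) := by
  have : finSuccEquiv' 0 i.succ = some i := finSuccEquiv'_succAbove (0 : Fin (n + 1)) i
  simp [permCons, this]

theorem permCons_bijective (n : ℕ) :
    Function.Bijective fun p : Fin (n + 1) × Equiv.Perm (Fin n) => permCons p.1 p.2 := by
  rw [Fintype.bijective_iff_injective_and_card]
  refine ⟨?_, by simp [Fintype.card_perm, Nat.factorial_succ]⟩
  rintro ⟨b, σ⟩ ⟨b', σ'⟩ h
  obtain rfl : b = b' := by simpa using DFunLike.congr_fun h 0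
  obtain rfl : σ = σ' := by
    ext i
    simpa [Fin.val_inj] using DFunLike.congr_fun h i.succ
  rfl

theorem permCons_trans_revPerm :
    (permCons b σ).trans Fin.revPerm = permCons b.rev (σ.trans Fin.revPerm) := by
  ext i
  cases i using Fin.cases <;> simp [Fin.rev_succAbove]

theorem forall_lt_succAbove_iff : (∀ c, b < b.succAbove c) ↔ b = 0 := by
  refine ⟨fun h => ?_, ?_⟩
  · by_contra hb
    obtain ⟨c, hc⟩ := Fin.exists_succAbove_eq (Ne.symm hb)
    exact Fin.not_lt_zero b (hc ▸ h c)
  · rintro rfl c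
    simp

theorem rlMinCount_permCons :
    rlMinCount (n + 1) (permCons b σ) = (if b = 0 then 1 else 0) + rlMinCount n σ := by
  classical
  have zero_isMin : (∀ j, 0 < j → permCons b σ 0 < permCons b σ j) ↔ b = 0 := by
    rw [← forall_lt_succAbove_iff, ← σ.forall_congr_right, Fin.forall_fin_succ]
    simp
  have succ_isMin (i : Fin n) : (∀ j, i.succ < j → permCons b σ i.succ < permCons b σ j) ↔
      ∀ j, i < j → σ i < σ j := by
    rw [Fin.forall_fin_succ]
    simp
  rw [rlMinCount, rlMinCount, Nat.card_eq_fintype_card, Nat.card_eq_fintype_card,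
    Fintype.card_subtype, Fintype.card_subtype, Fin.card_filter_univ_succ']
  simp only [zero_isMin, succ_isMin]

theorem rlMaxCount_eq_rlMinCount_trans_revPerm :
    rlMaxCount n σ = rlMinCount n (σ.trans Fin.revPerm) := by
  simp [rlMaxCount, rlMinCount]

theorem rlMaxCount_permCons :
    rlMaxCount (n + 1) (permCons b σ) = (if b = Fin.last n then 1 else 0) + rlMaxCount n σ := by
  simp only [rlMaxCount_eq_rlMinCount_trans_revPerm, permCons_trans_revPerm, rlMinCount_permCons,
    Fin.rev_eq_iff, Fin.rev_zero]

theorem mem_occSet_iff {m : ℕ} (π : Equiv.Perm (Fin (m + 1))) (i : Fin m) :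
    i ∈ occSet (m + 1) π ↔ ∃ j, i.succ < j ∧ π i.castSucc < π j ∧ π j < π i.succ :=
  Iff.rfl

theorem succ_mem_occSet_permCons {m : ℕ} (b : Fin (m + 2)) (σ : Equiv.Perm (Fin (m + 1)))
    (i : Fin m) : i.succ ∈ occSet (m + 2) (permCons b σ) ↔ i ∈ occSet (m + 1) σ := by
  rw [mem_occSet_iff, mem_occSet_iff, Fin.exists_fin_succ]
  simp

theorem zero_mem_occSet_permCons {m : ℕ} (b : Fin (m + 2)) (σ : Equiv.Perm (Fin (m + 1))) :
    (0 : Fin (m + 1)) ∈ occSet (m + 2) (permCons b σ) ↔ (b : ℕ) < σ 0 := by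
  rw [mem_occSet_iff, Fin.exists_fin_succ]
  simp only [Fin.castSucc_zero, permCons_zero, permCons_succ,
    Fin.lt_succAbove_iff_le_castSucc, Fin.succAbove_lt_succAbove_iff]
  constructor
  · rintro (⟨-, h, -⟩ | ⟨j, -, hbj, hj⟩)
    · exact absurd h (lt_irrefl _)
    · exact lt_of_le_of_lt hbj hj
  · intro h
    -- The value `b` of `σ` becomes `b + 1` after prepending `b`, so it plays the role of the 2.
    obtain ⟨j, hj⟩ := σ.surjective ⟨b, by omega⟩
    have hj0 : j ≠ 0 := by
      rintro rfl
      simp [hj] at h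
    refine Or.inr ⟨j, ?_, ?_, ?_⟩
    · exact Fin.succ_lt_succ_iff.2 (Fin.pos_iff_ne_zero.2 hj0)
    · simp [hj]
    · simpa [hj, Fin.lt_def] using h

theorem occSet_permCons_eq_iff {m : ℕ} (b : Fin (m + 2)) (σ : Equiv.Perm (Fin (m + 1)))
    (D : Set (Fin (m + 1))) :
    occSet (m + 2) (permCons b σ) = D ↔
      occSet (m + 1) σ = Fin.succ ⁻¹' D ∧ ((b : ℕ) < σ 0 ↔ 0 ∈ D) := by
  rw [Set.ext_iff, Set.ext_iff, ← zero_mem_occSet_permCons]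
  refine Fin.forall_fin_succ.trans (and_comm.trans (and_congr_left' (forall_congr' fun i => ?_)))
  rw [succ_mem_occSet_permCons, Set.mem_preimage]

end PermCons

section GeneratingFunction

variable {R : Type*} [CommSemiring R]

theorem pow_rlMinCount_mul_pow_rlMaxCount_permCons (x y : R) {n : ℕ} (b : Fin (n + 1))
    (σ : Equiv.Perm (Fin n)) :
    x ^ rlMinCount (n + 1) (permCons b σ) * y ^ rlMaxCount (n + 1) (permCons b σ) =
      x ^ rlMinCount n σ * y ^ rlMaxCount n σ * entryWeight x y n b := by
  simp only [rlMinCount_permCons, rlMaxCount_permCons, entryWeight, Fin.ext_iff, Fin.val_zero,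
    Fin.val_last, pow_add, pow_ite, pow_one, pow_zero]
  ring

open Classical in
/-- The generating function of right-to-left minima and maxima over the permutations of
`Fin (m + 1)` with occurrence set `D`, continued to the left by `k` further values none of which
creates an occurrence. -/
noncomputable def occGenFun (x y : R) (k m : ℕ) (D : Set (Fin m)) : R :=
  ∑ π : Equiv.Perm (Fin (m + 1)) with occSet (m + 1) π = D,
    x ^ rlMinCount (m + 1) π * y ^ rlMaxCount (m + 1) π * runSum x y k (m + 1) (π 0)

open Classical in
theorem occGenFun_succ (x y : R) (k m : ℕ) (D : Set (Fin (m + 1))) :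
    occGenFun x y k (m + 1) D =
      ∑ σ : Equiv.Perm (Fin (m + 1)) with occSet (m + 1) σ = Fin.succ ⁻¹' D,
        x ^ rlMinCount (m + 1) σ * y ^ rlMaxCount (m + 1) σ *
          ∑ b : Fin (m + 2) with (b.val < (σ 0).val ↔ 0 ∈ D),
            entryWeight x y (m + 1) b * runSum x y k (m + 2) b := by
  rw [occGenFun, sum_filter, ← (permCons_bijective (m + 1)).sum_comp, Fintype.sum_prod_type_right,
    sum_filter]
  refine sum_congr rfl fun σ _ => ?_
  simp only [occSet_permCons_eq_iff, pow_rlMinCount_mul_pow_rlMaxCount_permCons, permCons_zero,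
    ite_and, mul_sum, sum_filter, mul_assoc]
  split_ifs <;> simp

theorem occGenFun_succ_of_zero_notMem (x y : R) (k m : ℕ) {D : Set (Fin (m + 1))} (hD : 0 ∉ D) :
    occGenFun x y k (m + 1) D = occGenFun x y (k + 1) m (Fin.succ ⁻¹' D) := by
  simp only [occGenFun_succ, hD, iff_false, not_lt, sum_fin_le_eq_runSum]
  rfl

-- The step that forces an occurrence is complementary to the one that forbids it.
theorem occGenFun_succ_add_of_zero_mem (x y : R) (k m : ℕ) {D : Set (Fin (m + 1))} (hD : 0 ∈ D) :
    occGenFun x y k (m + 1) D + occGenFun x y (k + 1) m (Fin.succ ⁻¹' D) =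
      occGenFun x y 0 m (Fin.succ ⁻¹' D) * runSum x y (k + 1) (m + 1) 0 := by
  simp only [occGenFun_succ, hD, iff_true]
  simp only [occGenFun, ← sum_add_distrib, ← mul_add, sum_fin_lt_add_runSum, sum_mul]
  simp only [runSum, mul_one]

theorem occGenFun_comm [IsCancelAdd R] (x y : R) (k m : ℕ) (D : Set (Fin m)) :
    occGenFun x y k m D = occGenFun y x k m D := by
  induction m generalizing k with
  | zero =>
    refine sum_congr rfl fun π _ => ?_
    have rlMax_eq_rlMin : rlMaxCount (0 + 1) π = rlMinCount (0 + 1) π :=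
      (rlMaxCount_eq_rlMinCount_trans_revPerm π).trans
        (congrArg _ (Subsingleton.elim (α := Equiv.Perm (Fin 1)) _ _))
    rw [rlMax_eq_rlMin, Fin.val_eq_zero (π 0), runSum_zero_comm x y k le_rfl, mul_comm (x ^ _)]
  | succ m ih =>
    by_cases hD : 0 ∈ D
    · apply add_right_cancel (b := occGenFun x y (k + 1) m (Fin.succ ⁻¹' D))
      rw [occGenFun_succ_add_of_zero_mem x y k m hD, ih (k + 1),
        occGenFun_succ_add_of_zero_mem y x k m hD, ih 0, runSum_zero_comm x y (k + 1) (by omega)]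
    · rw [occGenFun_succ_of_zero_notMem x y k m hD, occGenFun_succ_of_zero_notMem y x k m hD, ih]

end GeneratingFunction

open Polynomial in
theorem coeff_coeff_sum_C_X_pow_mul_X_pow {R α : Type*} [Semiring R] (s : Finset α) (u v : α → ℕ)
    (e f : ℕ) :
    ((∑ a ∈ s, (C X : R[X][X]) ^ u a * X ^ v a).coeff f).coeff e =
      (#{a ∈ s | u a = e ∧ v a = f} : R) := by
  rw [card_filter, Nat.cast_sum, finsetSum_coeff, finsetSum_coeff]
  refine sum_congr rfl fun a _ => ?_
  rw [← C_pow, coeff_C_mul, coeff_X_pow]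
  by_cases hv : v a = f <;> simp [hv, coeff_X_pow, eq_comm (b := v a), eq_comm (b := u a)]

/-- On permutations with prescribed occurrence positions of 13-2, the joint
distribution of the number of right-to-left minima and right-to-left maxima is
symmetric. -/
theorem stmt13 (n : ℕ) (hn : 1 ≤ n) (D : Set (Fin (n-1))) (e f : ℕ) :
    Nat.card {π : Equiv.Perm (Fin n) //
        occSet n π = D ∧ rlMinCount n π = e ∧ rlMaxCount n π = f}
    = Nat.card {π : Equiv.Perm (Fin n) //
        occSet n π = D ∧ rlMinCount n π = f ∧ rlMaxCount n π = e} := by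
  classical
  obtain ⟨m, rfl⟩ : ∃ m, n = m + 1 := ⟨n - 1, by omega⟩
  open Polynomial in
  have genFun_symm := occGenFun_comm (C X : ℤ[X][X]) X 0 m D
  simp only [occGenFun, runSum, mul_one, mul_comm (Polynomial.X ^ _)] at genFun_symm
  have coeff_eq := congrArg (fun p => (p.coeff f).coeff e) genFun_symm
  simp only [coeff_coeff_sum_C_X_pow_mul_X_pow, Nat.cast_inj, filter_filter] at coeff_eq
  simpa only [Nat.card_eq_fintype_card, Fintype.card_subtype, and_comm] using coeff_eq
end
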